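/- For every integer r ≥ 1, every b ∈ {0,1}, and all natural numbers n ≥ m ≥ 0, the number of Dyck-type paths from (0,0) to (2n+b, 2m+b) staying weakly above the x-axis and containing no r consecutive down-steps, multiplied by n+m+b+1, equals (2m+b+1) · ⟨n+m+b+1 choose n-m⟩_r. -/

import Mathlib

/-- `dyckCount r a b` is the number of lattice paths from `(0,0)` to `(a+b, a-b)`
(encoded as words in `true` = up-step `(1,1)` and `false` = down-step `(1,-1)`,
with `a` up-steps and `b` down-steps) that stay weakly above the `x`-axis and
contain no `r` consecutive down-steps. -/
noncomputable def dyckCount (r a b : ℕ) : ℕ :=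
  Set.ncard {p : List Bool |
    p.count true = a ∧ p.count false = b ∧
    (∀ q : List Bool, q <+: p → q.count false ≤ q.count true) ∧
    ¬ List.replicate r false <:+: p}

/-- The Euler coefficient `⟨n choose k⟩_r`: the coefficient of `t^k` in the
polynomial `(1 + t + t^2 + ⋯ + t^(r-1))^n`, viewed as an integer. -/
noncomputable def eulerCoeff (r n k : ℕ) : ℤ :=
  ((∑ i ∈ Finset.range r, (Polynomial.X : Polynomial ℤ) ^ i) ^ n).coeff k

def dyckSet (r a b : ℕ) : Set (List Bool) := {p : List Bool |
    p.count true = a ∧ p.count false = b ∧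
    (∀ q : List Bool, q <+: p → q.count false ≤ q.count true) ∧
    ¬ List.replicate r false <:+: p}

theorem dyckSet_finite (r a b : ℕ) : (dyckSet r a b).Finite := by
  apply (List.finite_length_eq Bool (a + b)).subset
  rintro p ⟨h1, h2, -, -⟩
  have := List.count_true_add_count_false p
  simp only [Set.mem_ofPred_eq]
  omega

theorem decomp (p : List Bool) : (∃ j, p = List.replicate j false) ∨
    ∃ q j, p = q ++ true :: List.replicate j false := by
  induction p using List.reverseRecOn with
  | nil => exact Or.inl ⟨0, rfl⟩
  | append_singleton l c ih =>
    cases c with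
    | true => exact Or.inr ⟨l, 0, by simp⟩
    | false =>
      rcases ih with ⟨j, rfl⟩ | ⟨q, j, rfl⟩
      · exact Or.inl ⟨j + 1, by rw [List.replicate_succ']⟩
      · exact Or.inr ⟨q, j + 1, by rw [List.replicate_succ']; simp⟩

theorem pre_aux (r j : ℕ) (q : List Bool) :
    List.replicate r false <+: List.replicate j false ++ true :: q ↔ r ≤ j := by
  induction j generalizing r with
  | zero => cases r <;> simp [List.replicate_succ]
  | succ j ih => cases r with
    | zero => simp
    | succ r => simp only [List.replicate_succ, List.cons_append, List.cons_prefix_cons, ih]; simp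

theorem suf_aux (r j : ℕ) (q : List Bool) :
    List.replicate r false <:+ q ++ true :: List.replicate j false ↔ r ≤ j := by
  rw [← List.reverse_prefix]
  simpa using pre_aux r j q.reverse

theorem app_inj {j j' : ℕ} {q q' : List Bool}
    (h : q ++ true :: List.replicate j false = q' ++ true :: List.replicate j' false) :
    j = j' ∧ q = q' := by
  have hj : j = j' := by
    apply le_antisymm
    · rw [← suf_aux j j' q', ← h, suf_aux]
    · rw [← suf_aux j' j q, h, suf_aux]
  subst hj
  exact ⟨rfl, List.append_cancel_right h⟩

theorem inf_aux (r : ℕ) (hr : 1 ≤ r) (j : ℕ) (q : List Bool) :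
    List.replicate r false <:+: q ++ true :: List.replicate j false ↔
      List.replicate r false <:+: q ∨ r ≤ j := by
  induction j with
  | zero =>
    have := suf_aux r 0 q
    simp only [List.replicate_zero] at this ⊢
    rw [List.infix_concat_iff, this, or_comm]
  | succ j ih =>
    have := suf_aux r (j+1) q
    rw [List.replicate_succ', ← List.cons_append, ← List.append_assoc] at this ⊢
    rw [List.infix_concat_iff, this, ih]
    have h0 : r ≤ j → r ≤ j + 1 := by omega
    tauto

theorem bal_aux (j : ℕ) (q : List Bool) :
    (∀ s : List Bool, s <+: q ++ true :: List.replicate j false → s.count false ≤ s.count true) ↔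
      (∀ s : List Bool, s <+: q → s.count false ≤ s.count true) ∧
        q.count false + j ≤ q.count true + 1 := by
  induction j with
  | zero =>
    simp only [List.replicate_zero, List.prefix_concat_iff]
    constructor
    · intro h
      refine ⟨fun s hs => h s (Or.inr hs), ?_⟩
      have := h _ (Or.inl rfl)
      simpa using this
    · rintro ⟨h1, h2⟩ s (rfl | hs)
      · simpa using h2
      · exact h1 s hs
  | succ j ih =>
    rw [List.replicate_succ', ← List.cons_append, ← List.append_assoc]
    simp only [List.prefix_concat_iff, or_imp, forall_and, ih, forall_eq]
    simp [List.count_append, List.count_cons, List.count_replicate]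
    constructor
    · rintro ⟨h1, h2, h3⟩
      exact ⟨h2, by omega⟩
    · rintro ⟨h1, h2⟩
      exact ⟨by omega, h1, by omega⟩

theorem dyck_zero (r : ℕ) (hr : 1 ≤ r) : dyckCount r 0 0 = 1 := by
  have : dyckSet r 0 0 = {[]} := by
    ext p
    simp only [dyckSet, Set.mem_ofPred_eq, Set.mem_singleton_iff]
    constructor
    · rintro ⟨h1, h2, -, -⟩
      have := List.count_true_add_count_false p
      exact List.eq_nil_of_length_eq_zero (by omega)
    · rintro rfl
      simp; omega
  change (dyckSet r 0 0).ncard = 1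
  simp [this]

theorem dyck_big (r a k : ℕ) (h : a < k) : dyckCount r a k = 0 := by
  have : dyckSet r a k = ∅ := by
    ext p
    simp only [dyckSet, Set.mem_ofPred_eq, Set.mem_empty_iff_false, iff_false]
    rintro ⟨h1, h2, h3, -⟩
    have := h3 p (List.prefix_refl p)
    omega
  change (dyckSet r a k).ncard = 0
  simp [this]

theorem dyck_succ (r : ℕ) (hr : 1 ≤ r) (a k : ℕ) (hk : k ≤ a + 1) :
    dyckCount r (a + 1) k =
      ∑ j ∈ Finset.range r, if j ≤ k then dyckCount r a (k - j) else 0 := by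
  have key : dyckSet r (a + 1) k =
      ↑(((Finset.range r).filter (· ≤ k)).biUnion fun j =>
        (dyckSet_finite r a (k - j)).toFinset.image
          fun q => q ++ true :: List.replicate j false) := by
    ext p
    simp only [Finset.coe_biUnion, Finset.coe_image, Set.Finite.coe_toFinset, Set.mem_iUnion,
      Finset.coe_filter, Set.mem_ofPred_eq, Finset.mem_range, Set.mem_image, exists_prop]
    constructor
    · rintro ⟨h1, h2, h3, h4⟩
      rcases decomp p with ⟨j, rfl⟩ | ⟨q, j, rfl⟩
      · simp [List.count_replicate] at h1
      · rw [bal_aux] at h3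
        rw [inf_aux r hr] at h4
        simp [List.count_append, List.count_cons, List.count_replicate] at h1 h2
        refine ⟨j, ⟨by omega, by omega⟩, q, ⟨by omega, by omega, h3.1, fun h => h4 (Or.inl h)⟩, rfl⟩
    · rintro ⟨j, ⟨hj, hjk⟩, q, ⟨h1, h2, h3, h4⟩, rfl⟩
      refine ⟨?_, ?_, ?_, ?_⟩
      · simp [List.count_append, List.count_replicate, h1]
      · simp [List.count_append, List.count_replicate, h2]; omega
      · rw [bal_aux]; exact ⟨h3, by omega⟩
      · rw [inf_aux r hr]
        rintro (h | h)
        · exact h4 h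
        · omega
  change (dyckSet r (a + 1) k).ncard = _
  rw [key, Set.ncard_coe_finset, Finset.card_biUnion, Finset.sum_filter]
  · refine Finset.sum_congr rfl fun j _ => ?_
    split_ifs
    · rw [Finset.card_image_of_injective _ (fun x y h => (app_inj h).2),
        ← Set.ncard_eq_toFinset_card _ (dyckSet_finite r a (k - j))]
      rfl
    · rfl
  · intro i _ j _ hij
    rw [Function.onFun, Finset.disjoint_left]
    intro p hp hq
    rw [Finset.mem_image] at hp hq
    obtain ⟨x, -, rfl⟩ := hp
    obtain ⟨y, -, h⟩ := hq
    exact hij (app_inj h).1.symm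

theorem euler_succ (r n k : ℕ) : eulerCoeff r (n + 1) k =
    ∑ j ∈ Finset.range r, if j ≤ k then eulerCoeff r n (k - j) else 0 := by
  unfold eulerCoeff
  rw [pow_succ', Finset.sum_mul, Polynomial.finsetSum_coeff]
  simp only [Polynomial.coeff_X_pow_mul']

theorem euler_deriv (r n k : ℕ) : ((n : ℤ) + 1) *
    (∑ j ∈ Finset.range r, if j ≤ k then (j : ℤ) * eulerCoeff r n (k - j) else 0) =
      k * eulerCoeff r (n + 1) k := by
  unfold eulerCoeff
  set P : Polynomial ℤ := ∑ i ∈ Finset.range r, (Polynomial.X : Polynomial ℤ) ^ i with hP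
  have h1 : (Polynomial.X * Polynomial.derivative (P ^ (n + 1))).coeff k
      = k * (P ^ (n + 1)).coeff k := by
    cases k with
    | zero => simp
    | succ k => rw [Polynomial.coeff_X_mul, Polynomial.coeff_derivative]; push_cast; ring
  have h3 : Polynomial.X * Polynomial.derivative P =
      ∑ j ∈ Finset.range r, Polynomial.C (j : ℤ) * Polynomial.X ^ j := by
    rw [hP, Polynomial.derivative_sum, Finset.mul_sum]
    refine Finset.sum_congr rfl fun j _ => ?_
    cases j with
    | zero => simp
    | succ j => rw [Polynomial.derivative_X_pow]; simp; ring
  have h2 : Polynomial.X * Polynomial.derivative (P ^ (n + 1)) =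
      Polynomial.C ((n : ℤ) + 1) * ∑ j ∈ Finset.range r,
        Polynomial.C (j : ℤ) * (Polynomial.X ^ j * P ^ n) := by
    rw [Polynomial.derivative_pow_succ]
    simp only [← mul_assoc]
    rw [← Finset.sum_mul, ← h3]
    simp
    ring
  rw [← h1, h2, Polynomial.coeff_C_mul, Polynomial.finsetSum_coeff]
  simp only [Polynomial.coeff_C_mul, Polynomial.coeff_X_pow_mul', mul_ite, mul_zero]

theorem dyck_main (r : ℕ) (hr : 1 ≤ r) (a : ℕ) : ∀ k ≤ a + 1,
    ((a : ℤ) + 1) * dyckCount r a k = ((a : ℤ) + 1 - k) * eulerCoeff r (a + 1) k := by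
  induction a with
  | zero =>
    intro k hk
    interval_cases k
    · rw [dyck_zero r hr]
      obtain ⟨s, rfl⟩ : ∃ s, r = s + 1 := ⟨r - 1, by omega⟩
      simp [eulerCoeff, Polynomial.finsetSum_coeff, Polynomial.coeff_X_pow]
    · rw [dyck_big r 0 1 (by omega)]; simp
  | succ a ih =>
    intro k hk
    rcases Nat.lt_or_ge (a + 1) k with h | h
    · rw [dyck_big r _ k h]
      have : k = a + 2 := by omega
      subst this
      push_cast; ring
    · have e1 := dyck_succ r hr a k h
      have e2 := euler_succ r (a + 1) k
      have e3 := euler_deriv r (a + 1) k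
      have e4 : ((a : ℤ) + 1) * dyckCount r (a + 1) k =
          ((a : ℤ) + 1 - k) * eulerCoeff r (a + 1 + 1) k +
          ∑ j ∈ Finset.range r, if j ≤ k then (j : ℤ) * eulerCoeff r (a + 1) (k - j) else 0 := by
        rw [e1, e2]
        push_cast
        rw [Finset.mul_sum, Finset.mul_sum, ← Finset.sum_add_distrib]
        refine Finset.sum_congr rfl fun j _ => ?_
        split_ifs with hj
        · rw [ih (k - j) (by omega)]
          push_cast [hj]; ring
        · simp
      have ha : ((a : ℤ) + 1) ≠ 0 := by positivity
      apply mul_left_cancel₀ ha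
      push_cast at e3 ⊢
      linear_combination ((a : ℤ) + 2) * e4 + e3

theorem dyck_avoiding_down_runs_general (r : ℕ) (hr : 1 ≤ r) (b : ℕ) (hb : b ≤ 1)
    (n m : ℕ) (h : m ≤ n) :
    ((n : ℤ) + m + b + 1) * dyckCount r (n + m + b) (n - m) =
      (2 * (m : ℤ) + b + 1) * eulerCoeff r (n + m + b + 1) (n - m) := by
  have := dyck_main r hr (n + m + b) (n - m) (by omega)
  push_cast [h] at this
  rw [this]
  ring
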